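/- The functor M ↦ S(M) from the category of filtered A-modules (with compatible exhaustive filtrations) to the category of graded S(A)-modules that are flat over K[t] is an equivalence of categories, with quasi-inverse N ↦ N ⊗_{K[t]} K[t]/(t−1), where the filtration on the target module is induced by the images of the graded pieces under multiplication by powers of t. -/

import Mathlib

/-- A filtered `A`-module: an `A`-module `M` with a monotone, exhaustive `ℤ`-indexed
filtration by `K`-submodules compatible with the filtration `FA` of `A`. -/
structure FilteredModuleOver (K A : Type) [CommRing K] [CommRing A] [Algebra K A]
    (FA : ℕ → Submodule K A) where
  M : Type
  [ab : AddCommGroup M]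
  [modA : Module A M]
  [modK : Module K M]
  [tower : IsScalarTower K A M]
  F : ℤ → Submodule K M
  mono : Monotone F
  exhaustive : ∀ x : M, ∃ n, x ∈ F n
  compat : ∀ (m : ℕ) (a : A), a ∈ FA m → ∀ (n : ℤ) (x : M), x ∈ F n → a • x ∈ F (n + m)

attribute [instance] FilteredModuleOver.ab FilteredModuleOver.modA FilteredModuleOver.modK
  FilteredModuleOver.tower

/-- A `ℤ`-graded module over the Rees algebra `S(A) = ⊕ₘ FAₘ tᵐ` which is flat over `K[t]`:
a `K`-module `N` which is the internal direct sum of graded pieces `G n`, with the action of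
the degree-one element `t` (injective, i.e. `N` is `K[t]`-torsion free, hence flat) and with
the action `mu m a _` of each homogeneous element `a tᵐ` (`a ∈ FAₘ`) of `S(A)`, subject to
the module axioms. -/
structure GradedFlatReesModule (K A : Type) [CommRing K] [CommRing A] [Algebra K A]
    (FA : ℕ → Submodule K A) where
  N : Type
  [ab : AddCommGroup N]
  [modK : Module K N]
  G : ℤ → Submodule K N
  internal : DirectSum.IsInternal G
  t : N →ₗ[K] N
  t_deg : ∀ (n : ℤ) (x : N), x ∈ G n → t x ∈ G (n + 1)
  t_inj : Function.Injective t
  mu : ∀ m : ℕ, ∀ a : A, a ∈ FA m → N →ₗ[K] N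
  mu_deg : ∀ (m : ℕ) (a : A) (ha : a ∈ FA m) (n : ℤ) (x : N), x ∈ G n →
    mu m a ha x ∈ G (n + m)
  mu_add : ∀ (m : ℕ) (a b : A) (ha : a ∈ FA m) (hb : b ∈ FA m) (hab : a + b ∈ FA m),
    mu m (a + b) hab = mu m a ha + mu m b hb
  mu_smul : ∀ (m : ℕ) (c : K) (a : A) (ha : a ∈ FA m) (h : c • a ∈ FA m),
    mu m (c • a) h = c • mu m a ha
  mu_one : ∀ h : (1 : A) ∈ FA 0, mu 0 1 h = LinearMap.id
  mu_mul : ∀ (m m' : ℕ) (a a' : A) (ha : a ∈ FA m) (ha' : a' ∈ FA m')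
    (h : a * a' ∈ FA (m + m')), mu (m + m') (a * a') h = (mu m a ha) ∘ₗ (mu m' a' ha')
  mu_t : ∀ h : (1 : A) ∈ FA 1, mu 1 1 h = t
  mu_up : ∀ (m : ℕ) (a : A) (ha : a ∈ FA m) (ha' : a ∈ FA (m + 1)),
    mu (m + 1) a ha' = t ∘ₗ mu m a ha

attribute [instance] GradedFlatReesModule.ab GradedFlatReesModule.modK

namespace FilteredModuleOver

variable {K A : Type} [CommRing K] [CommRing A] [Algebra K A] {FA : ℕ → Submodule K A}

theorem component_eq_of_le {X₁ X₂ : FilteredModuleOver K A FA}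
    {φ : ∀ n : ℤ, X₁.F n →ₗ[K] X₂.F n}
    (hφ : ∀ (n : ℤ) (x : X₁.M) (hx : x ∈ X₁.F n),
      (φ (n + 1) ⟨x, X₁.mono (Int.le_add_one le_rfl) hx⟩ : X₂.M) = φ n ⟨x, hx⟩)
    {m n : ℤ} (hmn : m ≤ n) (x : X₁.M) (hx : x ∈ X₁.F m) :
    (φ n ⟨x, X₁.mono hmn hx⟩ : X₂.M) = φ m ⟨x, hx⟩ := by
  induction n, hmn using Int.leInduction with
  | base => rfl
  | succ n hmn ih => exact (hφ n x _).trans ih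

theorem component_eq {X₁ X₂ : FilteredModuleOver K A FA}
    {φ : ∀ n : ℤ, X₁.F n →ₗ[K] X₂.F n}
    (hφ : ∀ (n : ℤ) (x : X₁.M) (hx : x ∈ X₁.F n),
      (φ (n + 1) ⟨x, X₁.mono (Int.le_add_one le_rfl) hx⟩ : X₂.M) = φ n ⟨x, hx⟩)
    {m n : ℤ} (x : X₁.M) (hm : x ∈ X₁.F m) (hn : x ∈ X₁.F n) :
    (φ m ⟨x, hm⟩ : X₂.M) = φ n ⟨x, hn⟩ :=
  (component_eq_of_le hφ (le_max_left m n) x hm).symm.trans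
    (component_eq_of_le hφ (le_max_right m n) x hn)

theorem existsUnique_linearMap (hexhA : ∀ a : A, ∃ n, a ∈ FA n)
    (X₁ X₂ : FilteredModuleOver K A FA) (φ : ∀ n : ℤ, X₁.F n →ₗ[K] X₂.F n)
    (hφ : ∀ (n : ℤ) (x : X₁.M) (hx : x ∈ X₁.F n),
      (φ (n + 1) ⟨x, X₁.mono (Int.le_add_one le_rfl) hx⟩ : X₂.M) = φ n ⟨x, hx⟩)
    (hφA : ∀ (m : ℕ) (a : A) (ha : a ∈ FA m) (n : ℤ) (x : X₁.M) (hx : x ∈ X₁.F n),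
      (φ (n + m) ⟨a • x, X₁.compat m a ha n x hx⟩ : X₂.M) = a • (φ n ⟨x, hx⟩ : X₂.M)) :
    ∃! f : X₁.M →ₗ[A] X₂.M,
      ∀ (n : ℤ) (x : X₁.M) (hx : x ∈ X₁.F n), f x = (φ n ⟨x, hx⟩ : X₂.M) := by
  choose d hd using X₁.exhaustive
  refine ⟨{ toFun := fun x => φ (d x) ⟨x, hd x⟩, map_add' := ?_, map_smul' := ?_ }, ?_, ?_⟩
  · intro x y
    have hx := X₁.mono (le_max_left (d x) (d y)) (hd x)
    have hy := X₁.mono (le_max_right (d x) (d y)) (hd y)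
    rw [component_eq hφ _ (hd (x + y)) (add_mem hx hy), component_eq hφ _ (hd x) hx,
      component_eq hφ _ (hd y) hy, ← Submodule.coe_add, ← map_add]
    rfl
  · intro a x
    obtain ⟨m, ha⟩ := hexhA a
    rw [component_eq hφ _ (hd (a • x)) (X₁.compat m a ha _ x (hd x)), hφA m a ha]
    rfl
  · intro n x hx
    exact component_eq hφ x (hd x) hx
  · intro f hf
    ext x
    exact hf _ x (hd x)

end FilteredModuleOver

namespace GradedFlatReesModule

variable {K A : Type} [CommRing K] [CommRing A] [Algebra K A] {FA : ℕ → Submodule K A}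

theorem mu_congr (Y : GradedFlatReesModule K A FA) {m : ℕ} {a b : A} (h : a = b)
    (ha : a ∈ FA m) (hb : b ∈ FA m) : Y.mu m a ha = Y.mu m b hb := by
  subst h
  rfl

theorem mu_t_apply (Y : GradedFlatReesModule K A FA) (hmonoA : Monotone FA)
    (h1 : (1 : A) ∈ FA 0) {m : ℕ} {a : A} (ha : a ∈ FA m) (y : Y.N) :
    Y.mu m a ha (Y.t y) = Y.t (Y.mu m a ha y) := by
  have h1' : (1 : A) ∈ FA 1 := hmonoA zero_le_one h1
  have ha' : a ∈ FA (m + 1) := hmonoA m.le_succ ha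
  have ha1 : a * 1 ∈ FA (m + 1) := by rwa [mul_one]
  have h := Y.mu_mul m 1 a 1 ha h1' ha1
  rw [Y.mu_congr (mul_one a) ha1 ha', Y.mu_up m a ha ha', Y.mu_t h1'] at h
  exact (LinearMap.congr_fun h y).symm

/-- The image of multiplication by `t - 1`. -/
def relations (Y : GradedFlatReesModule K A FA) : Submodule K Y.N :=
  LinearMap.range (Y.t - LinearMap.id)

/-- The quotient `N ⊗_{K[t]} K[t]/(t - 1)`, realized as `N / (t - 1) N`. -/
abbrev Specialization (Y : GradedFlatReesModule K A FA) : Type :=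
  Y.N ⧸ Y.relations

theorem mkQ_t (Y : GradedFlatReesModule K A FA) (y : Y.N) :
    Y.relations.mkQ (Y.t y) = Y.relations.mkQ y := by
  rw [← sub_eq_zero, ← map_sub]
  exact (Submodule.Quotient.mk_eq_zero _).2 ⟨y, rfl⟩

theorem eq_zero_of_mem_relations (Y : GradedFlatReesModule K A FA) {n : ℤ} {x : Y.N}
    (hx : x ∈ Y.G n) (hr : x ∈ Y.relations) : x = 0 := by
  classical
  let := Y.internal.chooseDecomposition
  obtain ⟨y, rfl⟩ := hr
  set c : ℤ → Y.N := fun i => DirectSum.decompose Y.G y i with hc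
  have hct : ∀ i, (DirectSum.decompose Y.G (Y.t y) (i + 1) : Y.N) = Y.t (c i) := by
    intro i
    rw [hc]
    clear hx c hc
    induction y using DirectSum.Decomposition.inductionOn Y.G with
    | zero => simp
    | @homogeneous j z =>
      by_cases hj : j = i
      · subst hj
        rw [DirectSum.decompose_of_mem_same Y.G (Y.t_deg _ _ z.2)]
        simp
      · rw [DirectSum.decompose_of_mem_ne Y.G (Y.t_deg _ _ z.2) (by omega)]
        dsimp only
        rw [DirectSum.decompose_of_mem_ne Y.G z.2 hj, map_zero]
    | add u v hu hv => simp_all [DirectSum.decompose_add]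
  have hstep : ∀ i, i + 1 ≠ n → c (i + 1) = Y.t (c i) := by
    intro i hi
    have h := DirectSum.decompose_of_mem_ne Y.G hx hi.symm
    simp only [LinearMap.sub_apply, LinearMap.id_apply, DirectSum.decompose_sub,
      DirectSum.sub_apply, Submodule.coe_sub, hct, sub_eq_zero] at h
    exact h.symm
  have hfin : ∃ B : ℕ, ∀ i : ℤ, (B : ℤ) < |i| → c i = 0 := by
    refine ⟨(DirectSum.decompose Y.G y).support.sup Int.natAbs, fun i hi => ?_⟩
    by_contra hne
    have hmem : i ∈ (DirectSum.decompose Y.G y).support := by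
      rw [DFinsupp.mem_support_iff]
      exact fun h => hne (by simp [hc, h])
    have := Finset.le_sup (f := Int.natAbs) hmem
    rw [Int.abs_eq_natAbs] at hi
    omega
  obtain ⟨B, hB⟩ := hfin
  have hlow : ∀ i < n, c i = 0 := by
    intro i hi
    have hk : ∀ k : ℕ, ∀ j < n, j < -(B : ℤ) + k → c j = 0 := by
      intro k
      induction k with
      | zero => exact fun j _ hj => hB j (by rw [lt_abs]; omega)
      | succ k ih =>
        intro j hjn hj
        have h := hstep (j - 1) (by omega)
        rw [sub_add_cancel, ih (j - 1) (by omega) (by push_cast at hj; omega), map_zero] at h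
        exact h
    exact hk (i + B + 1).toNat i hi (by omega)
  have hhigh : ∀ i ≥ n, c i = 0 := by
    intro i hi
    have hk : ∀ k : ℕ, ∀ j ≥ n, (B : ℤ) - k < j → c j = 0 := by
      intro k
      induction k with
      | zero => exact fun j _ hj => hB j (by rw [lt_abs]; omega)
      | succ k ih =>
        intro j hjn hj
        have h := hstep j (by omega)
        rw [ih (j + 1) (by omega) (by push_cast at hj; omega)] at h
        exact Y.t_inj (h.symm.trans (map_zero _).symm)
    exact hk (B - i + 1).toNat i hi (by omega)
  have hy : y = 0 := by
    apply (DirectSum.decompose Y.G).injective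
    ext i
    rw [DirectSum.decompose_zero]
    rcases lt_or_ge i n with h | h
    · exact hlow i h
    · exact hhigh i h
  rw [hy, map_zero]

/-- The filtration of `N / (t - 1) N` by the images of the graded pieces. -/
def filtration (Y : GradedFlatReesModule K A FA) (n : ℤ) : Submodule K Y.Specialization :=
  (Y.G n).map Y.relations.mkQ

theorem filtration_mono (Y : GradedFlatReesModule K A FA) : Monotone Y.filtration := by
  refine monotone_int_of_le_succ fun n => ?_
  rintro _ ⟨x, hx, rfl⟩
  exact ⟨Y.t x, Y.t_deg n x hx, Y.mkQ_t x⟩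

theorem exists_mem_filtration (Y : GradedFlatReesModule K A FA) (x : Y.Specialization) :
    ∃ n, x ∈ Y.filtration n := by
  classical
  let := Y.internal.chooseDecomposition
  obtain ⟨y, rfl⟩ := Y.relations.mkQ_surjective x
  induction y using DirectSum.Decomposition.inductionOn Y.G with
  | zero => exact ⟨0, by simp⟩
  | @homogeneous j z => exact ⟨j, z, z.2, rfl⟩
  | add u v hu hv =>
    obtain ⟨m, hm⟩ := hu
    obtain ⟨n, hn⟩ := hv
    rw [map_add]
    exact ⟨max m n, add_mem (Y.filtration_mono (le_max_left m n) hm)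
      (Y.filtration_mono (le_max_right m n) hn)⟩

/-- The canonical map identifies the degree-`n` piece with the `n`-th step of the filtration. -/
noncomputable def gradedPieceEquiv (Y : GradedFlatReesModule K A FA) (n : ℤ) :
    Y.G n ≃ₗ[K] Y.filtration n :=
  LinearEquiv.ofBijective
    (Y.relations.mkQ.restrict fun _ hx => Submodule.mem_map_of_mem hx)
    ⟨(injective_iff_map_eq_zero _).2 fun x hx => Subtype.ext <|
      Y.eq_zero_of_mem_relations x.2 <|
        (Submodule.Quotient.mk_eq_zero _).1 (congrArg Subtype.val hx),
    by
      rintro ⟨_, x, hx, rfl⟩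
      exact ⟨⟨x, hx⟩, rfl⟩⟩

/-- The action of `a tᵐ` on `N / (t - 1) N`. -/
def muQuotient (Y : GradedFlatReesModule K A FA) (hmonoA : Monotone FA) (h1 : (1 : A) ∈ FA 0)
    (m : ℕ) (a : A) (ha : a ∈ FA m) : Module.End K Y.Specialization :=
  Y.relations.mapQ Y.relations (Y.mu m a ha) <| by
    rintro _ ⟨y, rfl⟩
    exact ⟨Y.mu m a ha y, by simp [Y.mu_t_apply hmonoA h1 ha]⟩

theorem muQuotient_mkQ (Y : GradedFlatReesModule K A FA) (hmonoA : Monotone FA)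
    (h1 : (1 : A) ∈ FA 0) {m : ℕ} {a : A} (ha : a ∈ FA m) (y : Y.N) :
    Y.muQuotient hmonoA h1 m a ha (Y.relations.mkQ y) = Y.relations.mkQ (Y.mu m a ha y) :=
  rfl

theorem muQuotient_eq_of_le (Y : GradedFlatReesModule K A FA) (hmonoA : Monotone FA)
    (h1 : (1 : A) ∈ FA 0) {m n : ℕ} (hmn : m ≤ n) {a : A} (ha : a ∈ FA m) :
    Y.muQuotient hmonoA h1 n a (hmonoA hmn ha) = Y.muQuotient hmonoA h1 m a ha := by
  induction n, hmn using Nat.le_induction with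
  | base => rfl
  | succ n hmn ih =>
    rw [← ih]
    refine Submodule.linearMap_qext _ (LinearMap.ext fun y => ?_)
    simp only [LinearMap.comp_apply, muQuotient_mkQ, Y.mu_up n a (hmonoA hmn ha), mkQ_t]

theorem muQuotient_eq (Y : GradedFlatReesModule K A FA) (hmonoA : Monotone FA)
    (h1 : (1 : A) ∈ FA 0) {m n : ℕ} {a : A} (hm : a ∈ FA m) (hn : a ∈ FA n) :
    Y.muQuotient hmonoA h1 m a hm = Y.muQuotient hmonoA h1 n a hn :=
  (Y.muQuotient_eq_of_le hmonoA h1 (le_max_left m n) hm).symm.trans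
    (Y.muQuotient_eq_of_le hmonoA h1 (le_max_right m n) hn)

/-- The action of `A` on `N / (t - 1) N`. -/
noncomputable def action (Y : GradedFlatReesModule K A FA) (hmonoA : Monotone FA)
    (h1 : (1 : A) ∈ FA 0) (hmulA : ∀ m n : ℕ, ∀ a ∈ FA m, ∀ b ∈ FA n, a * b ∈ FA (m + n))
    (hexhA : ∀ a : A, ∃ n, a ∈ FA n) : A →+* Module.End K Y.Specialization :=
  RingHom.mk'
    { toFun := fun a => Y.muQuotient hmonoA h1 _ a (hexhA a).choose_spec
      map_one' := by
        rw [Y.muQuotient_eq hmonoA h1 (hexhA 1).choose_spec h1]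
        refine Submodule.linearMap_qext _ (LinearMap.ext fun y => ?_)
        simp [muQuotient, Y.mu_one]
      map_mul' := fun a b => by
        rw [Y.muQuotient_eq hmonoA h1 (hexhA (a * b)).choose_spec
          (hmulA _ _ a (hexhA a).choose_spec b (hexhA b).choose_spec)]
        refine Submodule.linearMap_qext _ (LinearMap.ext fun y => ?_)
        simp only [LinearMap.comp_apply, Module.End.mul_apply, muQuotient_mkQ]
        rw [Y.mu_mul _ _ a b (hexhA a).choose_spec (hexhA b).choose_spec, LinearMap.comp_apply] }
    fun a b => by
      obtain ⟨m, hm⟩ := hexhA a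
      obtain ⟨n, hn⟩ := hexhA b
      have ha := hmonoA (le_max_left m n) hm
      have hb := hmonoA (le_max_right m n) hn
      simp only [MonoidHom.coe_mk, OneHom.coe_mk]
      rw [Y.muQuotient_eq hmonoA h1 (hexhA (a + b)).choose_spec (add_mem ha hb),
        Y.muQuotient_eq hmonoA h1 (hexhA a).choose_spec ha,
        Y.muQuotient_eq hmonoA h1 (hexhA b).choose_spec hb]
      refine Submodule.linearMap_qext _ (LinearMap.ext fun y => ?_)
      simp only [LinearMap.comp_apply, LinearMap.add_apply, muQuotient_mkQ,
        Y.mu_add _ a b ha hb, map_add]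

theorem action_mkQ (Y : GradedFlatReesModule K A FA) (hmonoA : Monotone FA)
    (h1 : (1 : A) ∈ FA 0) (hmulA : ∀ m n : ℕ, ∀ a ∈ FA m, ∀ b ∈ FA n, a * b ∈ FA (m + n))
    (hexhA : ∀ a : A, ∃ n, a ∈ FA n) {m : ℕ} {a : A} (ha : a ∈ FA m) (y : Y.N) :
    Y.action hmonoA h1 hmulA hexhA a (Y.relations.mkQ y) =
      Y.relations.mkQ (Y.mu m a ha y) := by
  rw [← Y.muQuotient_mkQ hmonoA h1 ha, Y.muQuotient_eq hmonoA h1 ha (hexhA a).choose_spec]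
  rfl

/-- The filtered `A`-module `N / (t - 1) N`. -/
noncomputable abbrev toFilteredModule (Y : GradedFlatReesModule K A FA) (hmonoA : Monotone FA)
    (h1 : (1 : A) ∈ FA 0) (hmulA : ∀ m n : ℕ, ∀ a ∈ FA m, ∀ b ∈ FA n, a * b ∈ FA (m + n))
    (hexhA : ∀ a : A, ∃ n, a ∈ FA n) : FilteredModuleOver K A FA :=
  letI : Module A Y.Specialization :=
    Module.compHom Y.Specialization (Y.action hmonoA h1 hmulA hexhA)
  { M := Y.Specialization
    tower := ⟨fun c a x => by
      obtain ⟨y, rfl⟩ := Y.relations.mkQ_surjective x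
      obtain ⟨m, ha⟩ := hexhA a
      change Y.action hmonoA h1 hmulA hexhA (c • a) _ =
        c • Y.action hmonoA h1 hmulA hexhA a _
      rw [Y.action_mkQ hmonoA h1 hmulA hexhA ((FA m).smul_mem c ha),
        Y.action_mkQ hmonoA h1 hmulA hexhA ha, Y.mu_smul m c a ha, LinearMap.smul_apply,
        map_smul]⟩
    F := Y.filtration
    mono := Y.filtration_mono
    exhaustive := Y.exists_mem_filtration
    compat := by
      rintro m a ha n _ ⟨y, hy, rfl⟩
      exact ⟨Y.mu m a ha y, Y.mu_deg m a ha n y hy,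
        (Y.action_mkQ hmonoA h1 hmulA hexhA ha y).symm⟩ }

end GradedFlatReesModule

/-- The Rees functor `M ↦ S(M)` from filtered `A`-modules (with compatible exhaustive
filtrations) to graded `S(A)`-modules flat over `K[t]` is an equivalence of categories,
with quasi-inverse `N ↦ N ⊗_{K[t]} K[t]/(t-1)`: it is essentially surjective (every graded
flat `S(A)`-module is, degreewise, the Rees module of a filtered module — the degree-`n`
piece being `F n`, with `t` acting as the inclusions `F n ⊆ F (n+1)` and `a tᵐ` acting by
`a • ·`), and fully faithful (graded maps of Rees modules correspond bijectively to
filtration-preserving `A`-linear maps). -/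
theorem rees_functor_equivalence
    (K A : Type) [Field K] [CommRing A] [Algebra K A]
    (FA : ℕ → Submodule K A) (hmonoA : Monotone FA) (h1 : (1 : A) ∈ FA 0)
    (hK : ∀ c : K, algebraMap K A c ∈ FA 0)
    (hmulA : ∀ m n : ℕ, ∀ a ∈ FA m, ∀ b ∈ FA n, a * b ∈ FA (m + n))
    (hexhA : ∀ a : A, ∃ n, a ∈ FA n) :
    -- essential surjectivity of the Rees functor `S(·)`
    (∀ Y : GradedFlatReesModule K A FA, ∃ X : FilteredModuleOver K A FA,
      ∃ e : ∀ n : ℤ, (Y.G n) ≃ₗ[K] (X.F n),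
        (∀ (n : ℤ) (x : Y.N) (hx : x ∈ Y.G n),
          ((e (n + 1) ⟨Y.t x, Y.t_deg n x hx⟩ : X.F (n + 1)) : X.M)
            = ((e n ⟨x, hx⟩ : X.F n) : X.M)) ∧
        (∀ (m : ℕ) (a : A) (ha : a ∈ FA m) (n : ℤ) (x : Y.N) (hx : x ∈ Y.G n),
          ((e (n + m) ⟨Y.mu m a ha x, Y.mu_deg m a ha n x hx⟩ : X.F (n + m)) : X.M)
            = a • ((e n ⟨x, hx⟩ : X.F n) : X.M))) ∧
    -- full faithfulness of the Rees functor `S(·)`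
    (∀ X₁ X₂ : FilteredModuleOver K A FA,
      ∀ φ : ∀ n : ℤ, (X₁.F n) →ₗ[K] (X₂.F n),
        (∀ (n : ℤ) (x : X₁.M) (hx : x ∈ X₁.F n),
          ((φ (n + 1) ⟨x, X₁.mono (by omega) hx⟩ : X₂.F (n + 1)) : X₂.M)
            = ((φ n ⟨x, hx⟩ : X₂.F n) : X₂.M)) →
        (∀ (m : ℕ) (a : A) (ha : a ∈ FA m) (n : ℤ) (x : X₁.M) (hx : x ∈ X₁.F n),
          ((φ (n + m) ⟨a • x, X₁.compat m a ha n x hx⟩ : X₂.F (n + m)) : X₂.M)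
            = a • ((φ n ⟨x, hx⟩ : X₂.F n) : X₂.M)) →
        ∃! f : X₁.M →ₗ[A] X₂.M,
          ∀ (n : ℤ) (x : X₁.M) (hx : x ∈ X₁.F n),
            f x = ((φ n ⟨x, hx⟩ : X₂.F n) : X₂.M)) := by
  refine ⟨fun Y => ⟨Y.toFilteredModule hmonoA h1 hmulA hexhA, Y.gradedPieceEquiv,
    fun n x hx => Y.mkQ_t x, fun m a ha n x hx => ?_⟩,
    FilteredModuleOver.existsUnique_linearMap hexhA⟩
  exact (Y.action_mkQ hmonoA h1 hmulA hexhA ha x).symm
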